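/- arXiv:1301.3765 — 2 statements merged into one kernel-verified Lean document; each statement's English description precedes it below -/
import Mathlib

section
/- Integral bound from a monotone differential inequality (key step in the proof of Lemma 5.2 of the paper): Let p > 1, λ > 0, c > 0, and let a < b be real numbers. Let W : [a, b] → ℝ be nondecreasing with W(b) ≤ 0 (so that λ − W(t) ≥ λ > 0 on [a, b]; being monotone, W is differentiable at Lebesgue-a.e. point of (a, b)). Let f : (a, b) → [0, ∞) be a Lebesgue-measurable function such that c · f(t) ≤ W′(t) / (λ − W(t))^p for a.e. t ∈ (a, b) at which W is differentiable. Then ∫_a^b f(t) dt ≤ 1 / (c (p − 1) λ^{p−1}). -/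
/-!
The function `G = (lam - W) ^ (1 - p) / (c (p - 1))` is nondecreasing on `[a, b]`, since `W` is
nondecreasing, `lam - W ≥ lam > 0` and `1 - p < 0`. By the chain rule `G' = W' / (c (lam - W) ^ p)`
wherever `W` is differentiable, hence almost everywhere, so the hypothesis says `f ≤ G'` almost
everywhere. Lebesgue's theorem for monotone functions then gives
`∫ f ≤ ∫ G' ≤ G b - G a ≤ G b ≤ 1 / (c (p - 1) lam ^ (p - 1))`.
-/

open MeasureTheory Set ENNReal

/-- Integral bound from a monotone differential inequality (key step in Lemma 5.2). -/
theorem integral_bound_of_monotone_diff_ineq (p lam c a b : ℝ)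
    (hp : 1 < p) (hlam : 0 < lam) (hc : 0 < c) (hab : a < b)
    (W f : ℝ → ℝ) (hW : MonotoneOn W (Set.Icc a b)) (hWb : W b ≤ 0)
    (hf : AEMeasurable f (volume.restrict (Set.Ioo a b)))
    (hf0 : ∀ t ∈ Set.Ioo a b, 0 ≤ f t)
    (hineq : ∀ᵐ t ∂(volume.restrict (Set.Ioo a b)),
      DifferentiableAt ℝ W t → c * f t ≤ deriv W t / (lam - W t) ^ p) :
    ∫⁻ t in Set.Ioo a b, ENNReal.ofReal (f t) ≤
      ENNReal.ofReal (1 / (c * (p - 1) * lam ^ (p - 1))) := by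
  have hp1 : 0 < p - 1 := by linarith
  have hK : 0 < c * (p - 1) := mul_pos hc hp1
  have hge : ∀ t ∈ Icc a b, lam ≤ lam - W t := fun t ht => by
    have := hW ht (right_mem_Icc.2 hab.le) ht.2
    linarith
  have hpos : ∀ t ∈ Icc a b, 0 < lam - W t := fun t ht => hlam.trans_le (hge t ht)
  let G : ℝ → ℝ := fun t => (lam - W t) ^ (1 - p) / (c * (p - 1))
  have hG : MonotoneOn G (Icc a b) := fun s hs t ht hst => by
    have hWst := hW hs ht hst
    exact div_le_div_of_nonneg_right
      (Real.rpow_le_rpow_of_nonpos (hpos t ht) (by linarith) (by linarith)) hK.le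
  have hGu : MonotoneOn G (uIcc a b) := by rwa [uIcc_of_le hab.le]
  have hderiv : ∀ t ∈ Ioo a b, DifferentiableAt ℝ W t →
      deriv G t = deriv W t / (lam - W t) ^ p / c := fun t ht hd => by
    have hpt := hpos t (Ioo_subset_Icc_self ht)
    have h := (((hd.hasDerivAt.const_sub lam).rpow_const (p := 1 - p)
      (Or.inl hpt.ne')).div_const (c * (p - 1))).deriv
    refine h.trans ?_
    rw [show 1 - p - 1 = -p by ring, Real.rpow_neg hpt.le]
    have := Real.rpow_pos_of_pos hpt p
    field_simp
    ring
  have hWd : ∀ᵐ t ∂(volume.restrict (Ioo a b)), DifferentiableAt ℝ W t := by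
    filter_upwards [(hW.mono Ioo_subset_Icc_self).ae_differentiableWithinAt measurableSet_Ioo,
      ae_restrict_mem measurableSet_Ioo] with t h ht
    exact h.differentiableAt (isOpen_Ioo.mem_nhds ht)
  have hfG : ∀ᵐ t ∂(volume.restrict (Ioo a b)), f t ≤ deriv G t := by
    filter_upwards [hineq, hWd, ae_restrict_mem measurableSet_Ioo] with t h hd ht
    rw [hderiv t ht hd, le_div_iff₀ hc, mul_comm]
    exact h hd
  have hG0 : ∀ᵐ t ∂(volume.restrict (Ioo a b)), 0 ≤ deriv G t := by
    filter_upwards [hfG, ae_restrict_mem measurableSet_Ioo] with t h ht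
    exact (hf0 t ht).trans h
  have hint : IntegrableOn (deriv G) (Ioo a b) :=
    ((intervalIntegrable_iff_integrableOn_Ioo_of_le hab.le).1 hGu.intervalIntegrable_deriv)
  have hle : ∫ t in Ioo a b, deriv G t ≤ G b - G a := by
    have h := hGu.intervalIntegral_deriv_mem_uIcc
    rw [uIcc_of_le (sub_nonneg.2 (hG (left_mem_Icc.2 hab.le) (right_mem_Icc.2 hab.le) hab.le)),
      intervalIntegral.integral_of_le hab.le, integral_Ioc_eq_integral_Ioo] at h
    exact h.2
  have hGa : 0 ≤ G a :=
    div_nonneg (Real.rpow_nonneg (hpos a (left_mem_Icc.2 hab.le)).le _) hK.le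
  have hGb : G b ≤ 1 / (c * (p - 1) * lam ^ (p - 1)) := by
    have h : (lam - W b) ^ (1 - p) ≤ lam ^ (1 - p) :=
      Real.rpow_le_rpow_of_nonpos hlam (hge b (right_mem_Icc.2 hab.le)) (by linarith)
    rw [show 1 / (c * (p - 1) * lam ^ (p - 1)) = lam ^ (1 - p) / (c * (p - 1)) by
      rw [show 1 - p = -(p - 1) by ring, Real.rpow_neg hlam.le]
      field_simp]
    exact div_le_div_of_nonneg_right h hK.le
  calc ∫⁻ t in Ioo a b, ENNReal.ofReal (f t)
      ≤ ∫⁻ t in Ioo a b, ENNReal.ofReal (deriv G t) :=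
        lintegral_mono_ae (hfG.mono fun t h => ENNReal.ofReal_le_ofReal h)
    _ = ENNReal.ofReal (∫ t in Ioo a b, deriv G t) :=
        (ofReal_integral_eq_lintegral_ofReal hint hG0).symm
    _ ≤ _ := ENNReal.ofReal_le_ofReal (by linarith)
end

section
/- Superlevel-set measure estimate before a fixed time (abstract core of Lemma 5.2 of the paper, negative-time case): Let (B, μ) be a σ-finite measure space, let p > 1, c > 0, λ > 0, and let t₁ < t₀ be real numbers. Let w : B × (t₁, t₀) → ℝ be jointly measurable, and let W : [t₁, t₀] → ℝ be nondecreasing with W(t₀) ≤ 0, such that for a.e. t ∈ (t₁, t₀) at which W is differentiable one has c · ∫_B |w(x, t) − W(t)|^p dμ(x) ≤ W′(t). Then the product measure ν = μ ⊗ L¹ (L¹ being Lebesgue measure on the time interval) satisfies ν({(x, t) ∈ B × (t₁, t₀) : w(x, t) > λ}) ≤ 1 / (c (p − 1) λ^{p−1}). -/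
/-!
Put `g t = (lam - W t) ^ (1 - p) / (c * (p - 1))`, which is nondecreasing on `[t₁, t₀]` because
`lam - W` is nonincreasing and at least `lam`. At almost every `t` the function `W` is
differentiable, and Chebyshev's inequality on the slice `{x | w (x, t) > lam}`, where
`|w - W| ≥ lam - W`, turns the hypothesis into `μ {x | w (x, t) > lam} ≤ W' t / (c (lam - W t) ^ p)`,
whose right side is `g' t`. By Tonelli the measure sought is at most `∫ g'`, and the integral of the
derivative of a monotone function is at most its increment
(`MonotoneOn.intervalIntegral_deriv_mem_uIcc`), so the bound is
`g t₀ - g t₁ ≤ g t₀ ≤ lam ^ (1 - p) / (c * (p - 1))`.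
-/

open MeasureTheory Set ENNReal

/-- Lebesgue's bound `∫ g' ≤ g b - g a` for monotone `g`, as a lower integral. -/
lemma lintegral_deriv_le_of_monotoneOn {g : ℝ → ℝ} {a b : ℝ} (hab : a ≤ b)
    (hg : MonotoneOn g (Icc a b)) :
    ∫⁻ t in Ioo a b, ENNReal.ofReal (deriv g t) ≤ ENNReal.ofReal (g b - g a) := by
  have hg' : MonotoneOn g (uIcc a b) := by rwa [uIcc_of_le hab]
  have hint := hg'.intervalIntegrable_deriv
  have hmem := hg'.intervalIntegral_deriv_mem_uIcc
  have hgab : g a ≤ g b := hg (left_mem_Icc.2 hab) (right_mem_Icc.2 hab) hab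
  rw [uIcc_of_le (by linarith)] at hmem
  rw [intervalIntegrable_iff_integrableOn_Ioo_of_le hab] at hint
  rw [intervalIntegral.integral_of_le hab, integral_Ioc_eq_integral_Ioo] at hmem
  rw [← ofReal_integral_eq_lintegral_ofReal hint]
  · exact ENNReal.ofReal_le_ofReal hmem.2
  · filter_upwards [ae_restrict_mem measurableSet_Ioo] with t ht
    -- the derivative at an interior point is the derivative within the interval
    rw [← derivWithin_of_mem_nhds (Icc_mem_nhds ht.1 ht.2)]
    exact hg.derivWithin_nonneg

/-- Chebyshev's inequality on one time slice; `W` and `D` are the values of the function `W` and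
of its derivative at that time. -/
lemma slice_measure_le {B : Type*} [MeasurableSpace B] (μ : Measure B) {p c lam W D : ℝ}
    (hp : 1 < p) (hc : 0 < c) (hlam : 0 < lam) (hW : W ≤ 0) {f : B → ℝ} (hf : Measurable f)
    (h : ENNReal.ofReal c * ∫⁻ x, ENNReal.ofReal (|f x - W| ^ p) ∂μ ≤ ENNReal.ofReal D) :
    μ {x | f x > lam} ≤ ENNReal.ofReal (D / (c * (lam - W) ^ p)) := by
  have hpos : 0 < (lam - W) ^ p := Real.rpow_pos_of_pos (by linarith) p
  have hcp : 0 < c * (lam - W) ^ p := mul_pos hc hpos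
  have hsub : {x | f x > lam} ⊆
      {x | ENNReal.ofReal ((lam - W) ^ p) ≤ ENNReal.ofReal (|f x - W| ^ p)} := by
    intro x hx
    have hx' : lam < f x := hx
    exact ENNReal.ofReal_le_ofReal (Real.rpow_le_rpow (by linarith)
      ((by linarith : lam - W ≤ f x - W).trans (le_abs_self _)) (by linarith))
  have hmeas : Measurable fun x => ENNReal.ofReal (|f x - W| ^ p) := by fun_prop
  rw [ENNReal.ofReal_div_of_pos hcp, ENNReal.le_div_iff_mul_le
    (Or.inl (by simpa using hcp)) (Or.inl ENNReal.ofReal_ne_top)]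
  calc μ {x | f x > lam} * ENNReal.ofReal (c * (lam - W) ^ p)
      = ENNReal.ofReal c * (ENNReal.ofReal ((lam - W) ^ p) * μ {x | f x > lam}) := by
        rw [ENNReal.ofReal_mul hc.le]; ring
    _ ≤ ENNReal.ofReal c * ∫⁻ x, ENNReal.ofReal (|f x - W| ^ p) ∂μ := by
        gcongr
        exact (mul_le_mul_right (measure_mono hsub) _).trans
          (mul_meas_ge_le_lintegral hmeas _)
    _ ≤ ENNReal.ofReal D := h

/-- Superlevel-set measure estimate before a fixed time (abstract core of Lemma 5.2,
negative-time case). -/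
theorem superlevel_measure_estimate_before {B : Type*} [MeasurableSpace B]
    (μ : Measure B) [SigmaFinite μ] (p c lam t₁ t₀ : ℝ)
    (hp : 1 < p) (hc : 0 < c) (hlam : 0 < lam) (ht : t₁ < t₀)
    (w : B × ℝ → ℝ) (hw : Measurable w)
    (W : ℝ → ℝ) (hW : MonotoneOn W (Set.Icc t₁ t₀)) (hW0 : W t₀ ≤ 0)
    (hineq : ∀ᵐ t ∂(volume.restrict (Set.Ioo t₁ t₀)),
      DifferentiableAt ℝ W t →
        ENNReal.ofReal c * ∫⁻ x, ENNReal.ofReal (|w (x, t) - W t| ^ p) ∂μ ≤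
          ENNReal.ofReal (deriv W t)) :
    (μ.prod volume) {z : B × ℝ | z.2 ∈ Set.Ioo t₁ t₀ ∧ w z > lam} ≤
      ENNReal.ofReal (1 / (c * (p - 1) * lam ^ (p - 1))) := by
  have hp1 : 0 < p - 1 := by linarith
  have hcp : 0 < c * (p - 1) := mul_pos hc hp1
  have hWneg : ∀ t ∈ Icc t₁ t₀, W t ≤ 0 := fun t h =>
    (hW h (right_mem_Icc.2 ht.le) h.2).trans hW0
  set g : ℝ → ℝ := fun t => (lam - W t) ^ (1 - p) / (c * (p - 1)) with hg_def
  have hg : MonotoneOn g (Icc t₁ t₀) := by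
    intro s hs t ht' hst
    have h1 := hW hs ht' hst
    have h2 := hWneg t ht'
    exact div_le_div_of_nonneg_right
      (Real.rpow_le_rpow_of_nonpos (by linarith) (by linarith) (by linarith)) hcp.le
  have hgderiv : ∀ t ∈ Icc t₁ t₀, DifferentiableAt ℝ W t →
      deriv g t = deriv W t / (c * (lam - W t) ^ p) := by
    intro t ht' hd
    have hpos : 0 < lam - W t := by linarith [hWneg t ht']
    have hpp : 0 < (lam - W t) ^ p := Real.rpow_pos_of_pos hpos p
    have h := (((hd.hasDerivAt.const_sub lam).rpow_const (p := 1 - p)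
      (Or.inl hpos.ne')).div_const (c * (p - 1))).deriv
    rw [hg_def, h, show 1 - p - 1 = -p by ring, Real.rpow_neg hpos.le]
    field_simp
    ring
  have hmeas : MeasurableSet {z : B × ℝ | z.2 ∈ Ioo t₁ t₀ ∧ w z > lam} :=
    (measurable_snd measurableSet_Ioo).inter (hw measurableSet_Ioi)
  have hdiff : ∀ᵐ t ∂(volume.restrict (Ioo t₁ t₀)), DifferentiableAt ℝ W t := by
    filter_upwards [(hW.mono Ioo_subset_Icc_self).ae_differentiableWithinAt measurableSet_Ioo,
      ae_restrict_mem measurableSet_Ioo] with t h1 h2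
    exact h1.differentiableAt (Ioo_mem_nhds h2.1 h2.2)
  calc (μ.prod volume) {z : B × ℝ | z.2 ∈ Ioo t₁ t₀ ∧ w z > lam}
      = ∫⁻ t, μ ((fun x => (x, t)) ⁻¹' {z : B × ℝ | z.2 ∈ Ioo t₁ t₀ ∧ w z > lam}) :=
        Measure.prod_apply_symm hmeas
    _ = ∫⁻ t in Ioo t₁ t₀, μ {x | w (x, t) > lam} := by
        rw [← lintegral_indicator measurableSet_Ioo]
        refine lintegral_congr fun t => ?_
        by_cases h : t ∈ Ioo t₁ t₀
        · rw [indicator_of_mem h]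
          congr 1
          ext x
          exact and_iff_right h
        · rw [indicator_of_notMem h]
          convert measure_empty (μ := μ)
          ext x
          exact iff_of_false (fun hx => h hx.1) (notMem_empty x)
    _ ≤ ∫⁻ t in Ioo t₁ t₀, ENNReal.ofReal (deriv g t) := by
        refine lintegral_mono_ae ?_
        filter_upwards [hineq, hdiff, ae_restrict_mem measurableSet_Ioo] with t h1 h2 h3
        have h4 := Ioo_subset_Icc_self h3
        rw [hgderiv t h4 h2]
        exact slice_measure_le μ hp hc hlam (hWneg t h4)
          (hw.comp measurable_prodMk_right) (h1 h2)
    _ ≤ ENNReal.ofReal (g t₀ - g t₁) := lintegral_deriv_le_of_monotoneOn ht.le hg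
    _ ≤ ENNReal.ofReal (1 / (c * (p - 1) * lam ^ (p - 1))) := by
        refine ENNReal.ofReal_le_ofReal ?_
        have h0 : 0 ≤ g t₁ := div_nonneg (Real.rpow_nonneg
          (by linarith [hWneg t₁ (left_mem_Icc.2 ht.le)]) _) hcp.le
        have h1 : g t₀ ≤ lam ^ (1 - p) / (c * (p - 1)) := div_le_div_of_nonneg_right
          (Real.rpow_le_rpow_of_nonpos hlam (by linarith) (by linarith)) hcp.le
        have h2 : lam ^ (1 - p) / (c * (p - 1)) = 1 / (c * (p - 1) * lam ^ (p - 1)) := by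
          rw [show 1 - p = -(p - 1) by ring, Real.rpow_neg hlam.le]
          field_simp
        linarith
end
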